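/- arXiv:1801.01054 — 2 statements merged into one kernel-verified Lean document; each statement's English description precedes it below -/
import Mathlib

section
/- Let h = 2^d with d ∈ ℕ and w ≥ 2. The self-intersection measure of the FHT pattern set satisfies r(H_{h,w}) = h; that is, for every nonempty subfamily ℳ ⊆ H_{h,w}, |ℳ| · |⋂_{T∈ℳ} T| ≤ h, and this value is attained (by a single pattern). -/
/-!
FHT patterns. Pixels are pairs `(i, j) : ℕ × ℕ` (row `i`, column `j`).
-/

/-- Width-cyclic translation `tran_{a,b}`: shift rows up by `a` and columns by `b`
cyclically modulo the image width `w`. -/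
def tran (w a b : ℕ) (T : Finset (ℕ × ℕ)) : Finset (ℕ × ℕ) :=
  T.image fun p => (p.1 + a, (p.2 + b) % w)

/-- The column of the (unique, for FHT patterns) pixel of `T` in row `i`. -/
def colAt (T : Finset (ℕ × ℕ)) (i : ℕ) : ℕ :=
  ((T.filter fun p => p.1 = i).image Prod.snd).sup id

/-- Horizontal span `Δ(T) = (j_top - j_bot) mod w` of a pattern of height `h`. -/
def span (w h : ℕ) (T : Finset (ℕ × ℕ)) : ℕ :=
  (colAt T (h - 1) + w - colAt T 0) % w

/-- The FHT pattern sets `H_k` (mostly vertical, inclined to the right) at image width `w`: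
`H_0` consists of the single bottom pixels, and `H_{k}` is obtained by stacking a translated
copy of each `T ∈ H_{k-1}` on top of itself, with horizontal shift `Δ(T) + s`, `s ∈ {0, 1}`.
`H_{h,w}` for `h = 2 ^ d` is `FHT w d`. -/
def FHT (w : ℕ) : ℕ → Finset (Finset (ℕ × ℕ))
  | 0 => (Finset.range w).image fun j => ({(0, j)} : Finset (ℕ × ℕ))
  | k + 1 =>
      ((FHT w k) ×ˢ ({0, 1} : Finset ℕ)).image
        fun q => q.1 ∪ tran w (2 ^ k) (span w (2 ^ k) q.1 + q.2) q.1

/-- The common intersection `⋂_{T ∈ M} T` of a family of patterns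
(equal to `∅` when `M` is empty). -/
def interF (M : Finset (Finset (ℕ × ℕ))) : Finset (ℕ × ℕ) :=
  (M.sup id).filter fun p => ∀ T ∈ M, p ∈ T

/-- Graph-like sets of pixels of height `n`. -/
structure Good (w n : ℕ) (T : Finset (ℕ × ℕ)) : Prop where
  row : ∀ p ∈ T, p.1 < n
  col : ∀ p ∈ T, p.2 < w
  ex : ∀ i < n, ∃ j, (i, j) ∈ T
  uniq : ∀ i j j', (i, j) ∈ T → (i, j') ∈ T → j = j'

theorem mem_tran {w a b : ℕ} {T : Finset (ℕ × ℕ)} {p : ℕ × ℕ} :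
    p ∈ tran w a b T ↔ ∃ j, ∃ i, (i, j) ∈ T ∧ p = (i + a, (j + b) % w) := by
  simp only [tran, Finset.mem_image, Prod.exists]
  constructor
  · rintro ⟨i, j, h, rfl⟩; exact ⟨j, i, h, rfl⟩
  · rintro ⟨j, i, h, rfl⟩; exact ⟨i, j, h, rfl⟩

theorem add_mod_inj {w a b c : ℕ} (ha : a < w) (hb : b < w) (h : (a + c) % w = (b + c) % w) :
    a = b := by
  have h1 : a + c ≡ b + c [MOD w] := h
  have h2 := Nat.ModEq.add_right_cancel' c h1
  exact Nat.ModEq.eq_of_lt_of_lt h2 ha hb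

theorem Good.sh {w n : ℕ} {T : Finset (ℕ × ℕ)} (hw : 2 ≤ w) (h : Good w n T) (b : ℕ) :
    Good w n (tran w 0 b T) := by
  refine ⟨?_, ?_, ?_, ?_⟩
  · intro p hp
    obtain ⟨j, i, hij, rfl⟩ := mem_tran.1 hp
    exact h.row (i, j) hij
  · intro p hp
    obtain ⟨j, i, hij, rfl⟩ := mem_tran.1 hp
    exact Nat.mod_lt _ (by omega)
  · intro i hi
    obtain ⟨j, hj⟩ := h.ex i hi
    exact ⟨_, mem_tran.2 ⟨j, i, hj, rfl⟩⟩
  · intro i j j' h1 h2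
    obtain ⟨a, i1, ha, e1⟩ := mem_tran.1 h1
    obtain ⟨a', i2, ha', e2⟩ := mem_tran.1 h2
    simp only [Prod.mk.injEq, add_zero] at e1 e2
    obtain ⟨rfl, rfl⟩ := e1
    obtain ⟨rfl, rfl⟩ := e2
    rw [h.uniq _ _ _ ha ha']

theorem Good.colAt {w n : ℕ} {T : Finset (ℕ × ℕ)} (h : Good w n T) {i j : ℕ}
    (hj : (i, j) ∈ T) : colAt T i = j := by
  have : (T.filter fun p => p.1 = i) = {(i, j)} := by
    ext ⟨a, b⟩
    simp only [Finset.mem_filter, Finset.mem_singleton, Prod.mk.injEq]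
    constructor
    · rintro ⟨h1, rfl⟩; exact ⟨rfl, h.uniq _ _ _ h1 hj⟩
    · rintro ⟨rfl, rfl⟩; exact ⟨hj, rfl⟩
  simp [_root_.colAt, this]

theorem span_arith {w x y b : ℕ} (hx : x < w) (hy : y < w) :
    ((x + b) % w + w - (y + b) % w) % w = (x + w - y) % w := by
  have hw : 0 < w := by omega
  have h1 := Nat.mod_lt (y + b) hw
  have key : (x + b) % w + w - (y + b) % w ≡ x + w - y [MOD w] := by
    apply Nat.ModEq.add_right_cancel' (y + b)
    have e2 : (x + w - y) + (y + b) = x + b + w := by omega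
    rw [e2]
    have e3 : (x + b) % w + w - (y + b) % w + (y + b)
        ≡ (x + b) % w + w - (y + b) % w + (y + b) % w [MOD w] :=
      Nat.ModEq.add_left _ (Nat.mod_modEq _ _).symm
    refine e3.trans ?_
    rw [Nat.sub_add_cancel (by omega)]
    exact Nat.ModEq.add_right _ (Nat.mod_modEq _ _)
  exact key

theorem Good.span_sh {w n : ℕ} {T : Finset (ℕ × ℕ)} (hw : 2 ≤ w) (hn : 0 < n)
    (h : Good w n T) (b : ℕ) : span w n (tran w 0 b T) = span w n T := by
  obtain ⟨x, hx⟩ := h.ex (n - 1) (by omega)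
  obtain ⟨y, hy⟩ := h.ex 0 hn
  have hx' : (n - 1, (x + b) % w) ∈ tran w 0 b T := mem_tran.2 ⟨x, n - 1, hx, rfl⟩
  have hy' : (0, (y + b) % w) ∈ tran w 0 b T := mem_tran.2 ⟨y, 0, hy, rfl⟩
  have h' := h.sh hw b
  simp only [span, h.colAt hx, h.colAt hy, h'.colAt hx', h'.colAt hy']
  exact span_arith (h.col _ hx) (h.col _ hy)

theorem tran_tran {w a b a' b' : ℕ} {T : Finset (ℕ × ℕ)} :
    tran w a b (tran w a' b' T) = tran w (a' + a) (b' + b) T := by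
  simp only [tran, Finset.image_image]
  congr 1
  funext p
  simp [Function.comp, add_assoc]

theorem Good.sh_dvd {w n : ℕ} {T : Finset (ℕ × ℕ)} (h : Good w n T) (c x : ℕ) (hc : c = w * x) :
    tran w 0 c T = T := by
  subst hc
  ext p
  rw [mem_tran]
  constructor
  · rintro ⟨j, i, hij, rfl⟩
    have := h.col _ hij
    simpa [Nat.mod_eq_of_lt this] using hij
  · intro hp
    have := h.col _ hp
    exact ⟨p.2, p.1, hp, by simp [Nat.mod_eq_of_lt this]⟩

theorem mem_FHT_succ {w k : ℕ} {T : Finset (ℕ × ℕ)} :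
    T ∈ FHT w (k + 1) ↔ ∃ S ∈ FHT w k, ∃ s, (s = 0 ∨ s = 1) ∧
      T = S ∪ tran w (2 ^ k) (span w (2 ^ k) S + s) S := by
  simp only [FHT, Finset.mem_image, Finset.mem_product, Prod.exists, Finset.mem_insert,
    Finset.mem_singleton]
  constructor
  · rintro ⟨S, s, ⟨h1, h2⟩, rfl⟩; exact ⟨S, h1, s, h2, rfl⟩
  · rintro ⟨S, h1, s, h2, rfl⟩; exact ⟨S, s, ⟨h1, h2⟩, rfl⟩

theorem FHT_good {w : ℕ} (hw : 2 ≤ w) (k : ℕ) : ∀ T ∈ FHT w k, Good w (2 ^ k) T := by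
  induction k with
  | zero =>
    intro T hT
    simp only [FHT, Finset.mem_image, Finset.mem_range] at hT
    obtain ⟨j, hj, rfl⟩ := hT
    refine ⟨by simp, by simpa using hj, ?_, ?_⟩
    · intro i hi
      exact ⟨j, by simp at hi; simp [hi]⟩
    · intro i a b ha hb
      simp at ha hb
      omega
  | succ k ih =>
    intro T hT
    obtain ⟨S, hS, s, -, rfl⟩ := mem_FHT_succ.1 hT
    have h := ih S hS
    generalize span w (2 ^ k) S + s = c
    refine ⟨?_, ?_, ?_, ?_⟩
    · intro p hp
      rcases Finset.mem_union.1 hp with hp | hp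
      · have := h.row _ hp; rw [pow_succ]; omega
      · obtain ⟨j, i, hij, rfl⟩ := mem_tran.1 hp
        have := h.row _ hij
        simp only at this ⊢
        rw [pow_succ]; omega
    · intro p hp
      rcases Finset.mem_union.1 hp with hp | hp
      · exact h.col _ hp
      · obtain ⟨j, i, hij, rfl⟩ := mem_tran.1 hp
        exact Nat.mod_lt _ (by omega)
    · intro i hi
      rw [pow_succ] at hi
      by_cases hik : i < 2 ^ k
      · obtain ⟨j, hj⟩ := h.ex i hik
        exact ⟨j, Finset.mem_union_left _ hj⟩
      · obtain ⟨j, hj⟩ := h.ex (i - 2 ^ k) (by omega)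
        refine ⟨(j + c) % w, Finset.mem_union_right _ (mem_tran.2 ⟨j, _, hj, ?_⟩)⟩
        · simp only [Prod.mk.injEq, and_true]; omega
    · intro i j j' h1 h2
      rcases Finset.mem_union.1 h1 with h1 | h1 <;> rcases Finset.mem_union.1 h2 with h2 | h2
      · exact h.uniq _ _ _ h1 h2
      · obtain ⟨a, b, hab, e⟩ := mem_tran.1 h2
        have := h.row _ h1
        simp only [Prod.mk.injEq] at e this
        omega
      · obtain ⟨a, b, hab, e⟩ := mem_tran.1 h1
        have := h.row _ h2
        simp only [Prod.mk.injEq] at e this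
        omega
      · obtain ⟨a, b, hab, e⟩ := mem_tran.1 h1
        obtain ⟨a', b', hab', e'⟩ := mem_tran.1 h2
        simp only [Prod.mk.injEq] at e e'
        have hb : b = b' := by omega
        subst hb
        rw [e.2, e'.2, h.uniq _ _ _ hab hab']

theorem tran_union {w a b : ℕ} {S T : Finset (ℕ × ℕ)} :
    tran w a b (S ∪ T) = tran w a b S ∪ tran w a b T := by
  simp [tran, Finset.image_union]

theorem FHT_sh {w : ℕ} (hw : 2 ≤ w) (k : ℕ) : ∀ T ∈ FHT w k, ∀ b, tran w 0 b T ∈ FHT w k := by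
  induction k with
  | zero =>
    intro T hT b
    simp only [FHT, Finset.mem_image, Finset.mem_range] at hT ⊢
    obtain ⟨j, hj, rfl⟩ := hT
    exact ⟨(j + b) % w, Nat.mod_lt _ (by omega), by simp [tran]⟩
  | succ k ih =>
    intro T hT b
    obtain ⟨S, hS, s, hs, rfl⟩ := mem_FHT_succ.1 hT
    refine mem_FHT_succ.2 ⟨_, ih S hS b, s, hs, ?_⟩
    rw [tran_union, (FHT_good hw k S hS).span_sh hw (by positivity), tran_tran, tran_tran]
    congr 2 <;> omega

/-- Lower half. -/
def lowHalf (n : ℕ) (T : Finset (ℕ × ℕ)) : Finset (ℕ × ℕ) := T.filter fun p => p.1 < n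

/-- Upper half, moved down. -/
def upHalf (n : ℕ) (T : Finset (ℕ × ℕ)) : Finset (ℕ × ℕ) :=
  (T.filter fun p => ¬ p.1 < n).image fun p => (p.1 - n, p.2)

theorem card_halves (n : ℕ) (T : Finset (ℕ × ℕ)) :
    (lowHalf n T).card + (upHalf n T).card = T.card := by
  unfold lowHalf upHalf
  rw [Finset.card_image_of_injOn, Finset.card_filter_add_card_filter_not]
  rintro ⟨a, b⟩ h ⟨a', b'⟩ h' e
  simp at h h' e ⊢
  omega

theorem lowHalf_mono (n : ℕ) {S T : Finset (ℕ × ℕ)} (h : S ⊆ T) : lowHalf n S ⊆ lowHalf n T :=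
  Finset.filter_subset_filter _ h

theorem upHalf_mono (n : ℕ) {S T : Finset (ℕ × ℕ)} (h : S ⊆ T) : upHalf n S ⊆ upHalf n T :=
  Finset.image_subset_image (Finset.filter_subset_filter _ h)

theorem lowHalf_union {w n c : ℕ} {S : Finset (ℕ × ℕ)} (h : Good w n S) :
    lowHalf n (S ∪ tran w n c S) = S := by
  ext p
  simp only [lowHalf, Finset.mem_filter, Finset.mem_union, mem_tran]
  constructor
  · rintro ⟨h1 | ⟨j, i, hij, rfl⟩, h2⟩
    · exact h1
    · simp at h2
  · intro hp
    exact ⟨Or.inl hp, h.row _ hp⟩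

theorem upHalf_union {w n c : ℕ} {S : Finset (ℕ × ℕ)} (h : Good w n S) :
    upHalf n (S ∪ tran w n c S) = tran w 0 c S := by
  ext p
  simp only [upHalf, Finset.mem_image, Finset.mem_filter, Finset.mem_union, mem_tran]
  constructor
  · rintro ⟨q, ⟨h1 | ⟨j, i, hij, rfl⟩, h2⟩, rfl⟩
    · exact absurd (h.row _ h1) h2
    · exact ⟨j, i, hij, by simp⟩
  · rintro ⟨j, i, hij, rfl⟩
    exact ⟨(i + n, (j + c) % w), ⟨Or.inr ⟨j, i, hij, rfl⟩, by simp⟩, by simp⟩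

theorem Good.disj {w n : ℕ} {V I : Finset (ℕ × ℕ)} (hw : 2 ≤ w) (h : Good w n V)
    (h1 : I ⊆ V) (h2 : I ⊆ tran w 0 1 V) : I = ∅ := by
  rw [Finset.eq_empty_iff_forall_notMem]
  intro p hp
  obtain ⟨j, i, hij, rfl⟩ := mem_tran.1 (h2 hp)
  have hu := h.uniq _ _ _ (h1 hp) hij
  have hj := h.col _ hij
  simp only at hj
  rcases Nat.lt_or_ge (j + 1) w with h3 | h3
  · rw [Nat.mod_eq_of_lt h3] at hu; omega
  · have : j + 1 = w := by omega
    rw [this, Nat.mod_self] at hu; omega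

/-- Decomposition of a pattern in terms of its lower and upper half. -/
theorem FHT_decomp {w : ℕ} (hw : 2 ≤ w) (k : ℕ) {T : Finset (ℕ × ℕ)} (hT : T ∈ FHT w (k + 1)) :
    lowHalf (2 ^ k) T ∈ FHT w k ∧ upHalf (2 ^ k) T ∈ FHT w k ∧
    ∃ s, (s = 0 ∨ s = 1) ∧
      upHalf (2 ^ k) T = tran w 0 (span w (2 ^ k) (lowHalf (2 ^ k) T) + s) (lowHalf (2 ^ k) T) ∧
      lowHalf (2 ^ k) T
        = tran w 0 ((w - 1) * (span w (2 ^ k) (upHalf (2 ^ k) T) + s)) (upHalf (2 ^ k) T) ∧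
      T = lowHalf (2 ^ k) T ∪ tran w (2 ^ k) 0 (upHalf (2 ^ k) T) := by
  obtain ⟨S, hS, s, hs, rfl⟩ := mem_FHT_succ.1 hT
  have h := FHT_good hw k S hS
  rw [lowHalf_union h, upHalf_union h]
  refine ⟨hS, FHT_sh hw k S hS _, s, hs, rfl, ?_, ?_⟩
  · rw [h.span_sh hw (by positivity), tran_tran, h.sh_dvd _ (span w (2 ^ k) S + s)]
    obtain ⟨v, rfl⟩ : ∃ v, w = v + 1 := ⟨w - 1, by omega⟩
    simp only [Nat.add_sub_cancel]; ring
  · rw [tran_tran]; simp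

theorem card_le_two_mul {M : Finset (Finset (ℕ × ℕ))} (f : Finset (ℕ × ℕ) → Finset (ℕ × ℕ))
    (g : Finset (ℕ × ℕ) → ℕ → Finset (ℕ × ℕ))
    (h : ∀ T ∈ M, ∃ s, (s = 0 ∨ s = 1) ∧ T = g (f T) s) : M.card ≤ 2 * (M.image f).card := by
  apply Finset.card_le_mul_card_image
  intro a _
  refine (Finset.card_le_card (t := {g a 0, g a 1}) ?_).trans Finset.card_le_two
  intro T hT
  obtain ⟨hTM, rfl⟩ := Finset.mem_filter.1 hT
  obtain ⟨s, rfl | rfl, e⟩ := h T hTM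
  · rw [Finset.mem_insert]; exact Or.inl e
  · rw [Finset.mem_insert, Finset.mem_singleton]; exact Or.inr e

theorem FHT_bound {w : ℕ} (hw : 2 ≤ w) (k : ℕ) : ∀ M ⊆ FHT w k, ∀ I : Finset (ℕ × ℕ),
    (∀ T ∈ M, I ⊆ T) → M.card * I.card ≤ 2 ^ k := by
  induction k with
  | zero =>
    intro M hM I hI
    have hM1 : I.Nonempty → M.card ≤ 1 := by
      rintro ⟨p, hp⟩
      rw [Finset.card_le_one]
      intro A hA B hB
      have hpA := hI A hA hp
      have hpB := hI B hB hp
      have hA := hM hA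
      have hB := hM hB
      simp only [FHT, Finset.mem_image, Finset.mem_range] at hA hB
      obtain ⟨a, -, rfl⟩ := hA
      obtain ⟨b, -, rfl⟩ := hB
      rw [Finset.mem_singleton] at hpA hpB
      rw [← hpA, ← hpB]
    rcases M.eq_empty_or_nonempty with rfl | ⟨A, hA⟩
    · simp
    rcases I.eq_empty_or_nonempty with rfl | hne
    · simp
    have h1 := hM1 hne
    have h2 : I.card ≤ 1 := by
      refine (Finset.card_le_card (hI A hA)).trans ?_
      have hA := hM hA
      simp only [FHT, Finset.mem_image, Finset.mem_range] at hA
      obtain ⟨a, -, rfl⟩ := hA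
      simp
    simpa using Nat.mul_le_mul h1 h2
  | succ k ih =>
    intro M hM I hI
    set n := 2 ^ k with hn
    have dec := fun T (hT : T ∈ M) => FHT_decomp hw k (hM hT)
    rw [← hn] at dec
    have hL := ih (M.image (lowHalf n))
      (by intro A hA; obtain ⟨T, hT, rfl⟩ := Finset.mem_image.1 hA; exact (dec T hT).1)
      (lowHalf n I)
      (by intro A hA; obtain ⟨T, hT, rfl⟩ := Finset.mem_image.1 hA
          exact lowHalf_mono n (hI T hT))
    have hU := ih (M.image (upHalf n))
      (by intro A hA; obtain ⟨T, hT, rfl⟩ := Finset.mem_image.1 hA; exact (dec T hT).2.1)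
      (upHalf n I)
      (by intro A hA; obtain ⟨T, hT, rfl⟩ := Finset.mem_image.1 hA
          exact upHalf_mono n (hI T hT))
    have hc := card_halves n I
    have hp : 2 ^ (k + 1) = 2 * n := by rw [pow_succ, hn]; ring
    rw [hp]
    by_cases injL : Set.InjOn (lowHalf n) (M : Set (Finset (ℕ × ℕ)))
    · by_cases injU : Set.InjOn (upHalf n) (M : Set (Finset (ℕ × ℕ)))
      · rw [Finset.card_image_of_injOn injL] at hL
        rw [Finset.card_image_of_injOn injU] at hU
        rw [← hc, mul_add]; omega
      · -- two patterns with the same upper half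
        have key : ∀ A ∈ M, ∀ B ∈ M, upHalf n A = upHalf n B →
            lowHalf n B = tran w 0 ((w - 1) * (span w n (upHalf n B) + 0)) (upHalf n B) →
            lowHalf n A = tran w 0 ((w - 1) * (span w n (upHalf n B) + 1)) (upHalf n B) →
            lowHalf n I = ∅ := by
          intro A hA B hB e h0 h1
          have gB := FHT_good hw k _ (dec B hB).2.1
          have gA := FHT_good hw k _ (dec A hA).1
          refine gA.disj hw (lowHalf_mono n (hI A hA)) ?_
          have : tran w 0 1 (lowHalf n A) = lowHalf n B := by
            rw [h1, h0, tran_tran]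
            obtain ⟨v, rfl⟩ : ∃ v, w = v + 1 := ⟨w - 1, by omega⟩
            generalize span (v + 1) n (upHalf n B) = x
            have e : (v + 1 - 1) * (x + 1) + 1 = (v + 1) * 1 + (v + 1 - 1) * (x + 0) := by
              simp only [Nat.add_sub_cancel]; ring
            rw [e, ← tran_tran (a' := 0) (a := 0), gB.sh_dvd _ 1 rfl]
          rw [this]
          exact lowHalf_mono n (hI B hB)
        have hemp : lowHalf n I = ∅ := by
          simp only [Set.InjOn, not_forall] at injU
          obtain ⟨A, hA, B, hB, e, hne⟩ := injU
          obtain ⟨-, -, s, hs, -, eA, tA⟩ := dec A hA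
          obtain ⟨-, -, t, ht, -, eB, tB⟩ := dec B hB
          rcases hs with rfl | rfl <;> rcases ht with rfl | rfl
          · exact absurd (by rw [tA, tB, eA, eB, e]) hne
          · exact key B hB A hA e.symm eA (by rw [e]; exact eB)
          · exact key A hA B hB e eB (by rw [← e]; exact eA)
          · exact absurd (by rw [tA, tB, eA, eB, e]) hne
        have h2 := card_le_two_mul (M := M) (upHalf n)
          (fun U s => tran w 0 ((w - 1) * (span w n U + s)) U ∪ tran w n 0 U) (by
            intro T hT
            obtain ⟨-, -, s, hs, -, eT, tT⟩ := dec T hT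
            exact ⟨s, hs, by rw [← eT]; exact tT⟩)
        rw [hemp, Finset.card_empty, zero_add] at hc
        rw [← hc]
        calc M.card * (upHalf n I).card
            ≤ 2 * (M.image (upHalf n)).card * (upHalf n I).card := Nat.mul_le_mul_right _ h2
          _ = 2 * ((M.image (upHalf n)).card * (upHalf n I).card) := by ring
          _ ≤ 2 * n := Nat.mul_le_mul_left _ hU
    · have key : ∀ A ∈ M, ∀ B ∈ M, lowHalf n A = lowHalf n B →
          upHalf n B = tran w 0 (span w n (lowHalf n B) + 0) (lowHalf n B) →
          upHalf n A = tran w 0 (span w n (lowHalf n B) + 1) (lowHalf n B) →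
          upHalf n I = ∅ := by
        intro A hA B hB e h0 h1
        have gB := FHT_good hw k _ (dec B hB).2.1
        refine gB.disj hw (upHalf_mono n (hI B hB)) ?_
        have : tran w 0 1 (upHalf n B) = upHalf n A := by
          rw [h1, h0, tran_tran]
        rw [this]
        exact upHalf_mono n (hI A hA)
      have hemp : upHalf n I = ∅ := by
        simp only [Set.InjOn, not_forall] at injL
        obtain ⟨A, hA, B, hB, e, hne⟩ := injL
        obtain ⟨-, -, s, hs, eA, -, tA⟩ := dec A hA
        obtain ⟨-, -, t, ht, eB, -, tB⟩ := dec B hB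
        rcases hs with rfl | rfl <;> rcases ht with rfl | rfl
        · exact absurd (by rw [tA, tB, eA, eB, e]) hne
        · exact key B hB A hA e.symm eA (by rw [e]; exact eB)
        · exact key A hA B hB e eB (by rw [← e]; exact eA)
        · exact absurd (by rw [tA, tB, eA, eB, e]) hne
      have h2 := card_le_two_mul (M := M) (lowHalf n)
        (fun L s => L ∪ tran w n 0 (tran w 0 (span w n L + s) L)) (by
          intro T hT
          obtain ⟨-, -, s, hs, eT, -, tT⟩ := dec T hT
          exact ⟨s, hs, by rw [← eT]; exact tT⟩)
      rw [hemp, Finset.card_empty, add_zero] at hc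
      rw [← hc]
      calc M.card * (lowHalf n I).card
          ≤ 2 * (M.image (lowHalf n)).card * (lowHalf n I).card := Nat.mul_le_mul_right _ h2
        _ = 2 * ((M.image (lowHalf n)).card * (lowHalf n I).card) := by ring
        _ ≤ 2 * n := Nat.mul_le_mul_left _ hL

theorem Good.card {w n : ℕ} {T : Finset (ℕ × ℕ)} (h : Good w n T) : T.card = n := by
  have h1 : T.image Prod.fst = Finset.range n := by
    ext i
    simp only [Finset.mem_image, Finset.mem_range]
    constructor
    · rintro ⟨p, hp, rfl⟩; exact h.row _ hp
    · intro hi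
      obtain ⟨j, hj⟩ := h.ex i hi
      exact ⟨_, hj, rfl⟩
  have h2 : (T.image Prod.fst).card = T.card := by
    apply Finset.card_image_of_injOn
    rintro ⟨a, b⟩ hp ⟨a', b'⟩ hq e
    simp only at e
    subst e
    rw [h.uniq _ _ _ (Finset.mem_coe.1 hp) (Finset.mem_coe.1 hq)]
  rw [← h2, h1, Finset.card_range]

theorem FHT_nonempty {w : ℕ} (hw : 2 ≤ w) (k : ℕ) : (FHT w k).Nonempty := by
  induction k with
  | zero => exact ⟨{(0, 0)}, Finset.mem_image.2 ⟨0, Finset.mem_range.2 (by omega), rfl⟩⟩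
  | succ k ih =>
    obtain ⟨S, hS⟩ := ih
    exact ⟨_, mem_FHT_succ.2 ⟨S, hS, 0, Or.inl rfl, rfl⟩⟩

/-- For `h = 2 ^ d` and `w ≥ 2`, the self-intersection measure of the FHT pattern set
satisfies `r(H_{h,w}) = h`: every nonempty subfamily `M ⊆ H_{h,w}` has intersection area
`S(M) = |M| · |⋂_{T ∈ M} T| ≤ h`, and this value is attained. -/
theorem fht_self_intersection (w d : ℕ) (hw : 2 ≤ w) :
    (∀ M ⊆ FHT w d, M.Nonempty → M.card * (interF M).card ≤ 2 ^ d) ∧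
    (∃ M ⊆ FHT w d, M.Nonempty ∧ M.card * (interF M).card = 2 ^ d) := by
  refine ⟨?_, ?_⟩
  · intro M hM _
    exact FHT_bound hw d M hM (interF M) fun T hT p hp => (Finset.mem_filter.1 hp).2 T hT
  · obtain ⟨T, hT⟩ := FHT_nonempty hw d
    refine ⟨{T}, Finset.singleton_subset_iff.2 hT, Finset.singleton_nonempty T, ?_⟩
    have : interF {T} = T := by
      ext p
      simp [interF]
    rw [this, Finset.card_singleton, one_mul, (FHT_good hw d T hT).card]
end

section
/- Let h = 2^d with d ∈ ℕ and w ≥ 2. Every binary-union straight-line program computing the FHT pattern set H_{h,w} has at least log₉(8) · w·h·log₂(h) steps; i.e. OR2(H_{h,w}) ≥ log₉(8)·w·h·log₂(h). Consequently, computing all the sums Σ_{p∈T} p for T ∈ H_{h,w} by binary additions also requires at least log₉(8)·w·h·log₂(h) additions. -/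
/-- An admissible operand of step `t` of a binary-union straight-line program
`s : Fin g → Finset α`: a singleton pixel or some earlier step. -/
def IsOperand {α : Type*} {g : ℕ} (s : Fin g → Finset α) (t : Fin g) (A : Finset α) : Prop :=
  (∃ p, A = {p}) ∨ ∃ u, u < t ∧ A = s u

/-- `s` is a binary-union straight-line program: each step is the union of two admissible
operands. -/
def ValidProg {α : Type*} [DecidableEq α] {g : ℕ} (s : Fin g → Finset α) : Prop :=
  ∀ t, ∃ A B, IsOperand s t A ∧ IsOperand s t B ∧ s t = A ∪ B

/-- The program `s` computes the pattern family `𝒯`: every pattern of `𝒯` is a singleton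
or appears among the steps of `s`. -/
def Computes {α : Type*} {g : ℕ} (s : Fin g → Finset α) (𝒯 : Finset (Finset α)) : Prop :=
  ∀ T ∈ 𝒯, (∃ p, T = {p}) ∨ ∃ t, s t = T

/-- `OR2 𝒯` is the minimal number of steps (binary gates) over all binary-union
straight-line programs computing `𝒯`. -/
noncomputable def OR2 {α : Type*} [DecidableEq α] (𝒯 : Finset (Finset α)) : ℕ :=
  sInf {g | ∃ s : Fin g → Finset α, ValidProg s ∧ Computes s 𝒯}

/-! ### Existence of programs -/

lemma validProg_snoc {α : Type*} [DecidableEq α] {g : ℕ} (s : Fin g → Finset α)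
    (hs : ValidProg s) (A B : Finset α)
    (hA : (∃ p, A = {p}) ∨ ∃ u, A = s u) (hB : (∃ p, B = {p}) ∨ ∃ u, B = s u) :
    ValidProg (Fin.snoc s (A ∪ B) : Fin (g + 1) → Finset α) := by
  intro t
  refine Fin.lastCases ?_ (fun i => ?_) t
  · refine ⟨A, B, ?_, ?_, by simp⟩
    · rcases hA with h | ⟨u, h⟩
      · exact Or.inl h
      · exact Or.inr ⟨u.castSucc, Fin.castSucc_lt_last u, by simpa using h⟩
    · rcases hB with h | ⟨u, h⟩
      · exact Or.inl h
      · exact Or.inr ⟨u.castSucc, Fin.castSucc_lt_last u, by simpa using h⟩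
  · obtain ⟨A', B', h1, h2, h3⟩ := hs i
    refine ⟨A', B', ?_, ?_, by simpa using h3⟩
    · rcases h1 with h | ⟨u, hu, h⟩
      · exact Or.inl h
      · exact Or.inr ⟨u.castSucc, by simpa using hu, by simpa using h⟩
    · rcases h2 with h | ⟨u, hu, h⟩
      · exact Or.inl h
      · exact Or.inr ⟨u.castSucc, by simpa using hu, by simpa using h⟩

lemma exists_extend {α : Type*} [DecidableEq α] {g : ℕ} (s : Fin g → Finset α)
    (hs : ValidProg s) (T : Finset α) (hT : T.Nonempty) :
    ∃ (g' : ℕ) (s' : Fin g' → Finset α), ValidProg s' ∧ (∀ u, ∃ u', s' u' = s u) ∧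
      ((∃ p, T = {p}) ∨ ∃ t, s' t = T) := by
  induction hT using Finset.Nonempty.cons_induction with
  | singleton a => exact ⟨g, s, hs, fun u => ⟨u, rfl⟩, Or.inl ⟨a, rfl⟩⟩
  | cons a T ha hT ih =>
    obtain ⟨g', s', h1, h2, h3⟩ := ih
    refine ⟨g' + 1, Fin.snoc s' ({a} ∪ T), validProg_snoc s' h1 _ _ (Or.inl ⟨a, rfl⟩) ?_, ?_, ?_⟩
    · rcases h3 with h | ⟨t, h⟩
      · exact Or.inl h
      · exact Or.inr ⟨t, h.symm⟩
    · intro u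
      obtain ⟨u', hu'⟩ := h2 u
      exact ⟨u'.castSucc, by simpa using hu'⟩
    · refine Or.inr ⟨Fin.last _, ?_⟩
      rw [Fin.snoc_last, Finset.cons_eq_insert, Finset.insert_eq]

lemma exists_prog {α : Type*} [DecidableEq α] (F : Finset (Finset α))
    (hF : ∀ T ∈ F, T.Nonempty) :
    ∃ (g : ℕ) (s : Fin g → Finset α), ValidProg s ∧ Computes s F := by
  induction F using Finset.induction_on with
  | empty => exact ⟨0, Fin.elim0, fun t => t.elim0, fun T hT => by simp at hT⟩
  | insert T F hT ih =>
    obtain ⟨g, s, h1, h2⟩ := ih (fun T' h => hF T' (Finset.mem_insert_of_mem h))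
    obtain ⟨g', s', h3, h4, h5⟩ := exists_extend s h1 T (hF T (Finset.mem_insert_self _ _))
    refine ⟨g', s', h3, fun T' hT' => ?_⟩
    rcases Finset.mem_insert.1 hT' with rfl | h
    · exact h5
    · rcases h2 T' h with h | ⟨t, h⟩
      · exact Or.inl h
      · obtain ⟨t', ht'⟩ := h4 t
        exact Or.inr ⟨t', ht'.trans h⟩

lemma FHT_nonempty_s12 (w k : ℕ) : ∀ T ∈ FHT w k, T.Nonempty := by
  induction k with
  | zero =>
    intro T hT
    simp only [FHT, Finset.mem_image] at hT
    obtain ⟨j, _, rfl⟩ := hT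
    simp
  | succ k ih =>
    intro T hT
    simp only [FHT, Finset.mem_image, Finset.mem_product] at hT
    obtain ⟨q, ⟨hq, _⟩, rfl⟩ := hT
    exact (ih _ hq).mono Finset.subset_union_left

/-! ### Parametrization of the patterns -/

/-- Offset (mod `w`) in row `i` of the pattern with bit code `n`. -/
def off (w : ℕ) : ℕ → ℕ → ℕ → ZMod w
  | 0, _, _ => 0
  | k + 1, n, i =>
      if i < 2 ^ k then off w k (n / 2) i
      else off w k (n / 2) (i - 2 ^ k) + (off w k (n / 2) (2 ^ k - 1) + ((n % 2 : ℕ) : ZMod w))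

lemma off_zero (w k n : ℕ) : off w k n 0 = 0 := by
  induction k generalizing n with
  | zero => rfl
  | succ k ih => simp [off, ih]

/-- Indices of patterns containing a given set of pixels. -/
def hits (w : ℕ) [NeZero w] (k : ℕ) (S : Finset (ℕ × ZMod w)) : Finset (ZMod w × ℕ) :=
  ((Finset.univ : Finset (ZMod w)) ×ˢ Finset.range (2 ^ k)).filter
    fun x => ∀ p ∈ S, p.1 < 2 ^ k ∧ p.2 = x.1 + off w k x.2 p.1

lemma mem_hits {w : ℕ} [NeZero w] {k : ℕ} {S : Finset (ℕ × ZMod w)} {x : ZMod w × ℕ} :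
    x ∈ hits w k S ↔ x.2 < 2 ^ k ∧ ∀ p ∈ S, p.1 < 2 ^ k ∧ p.2 = x.1 + off w k x.2 p.1 := by
  simp [hits]

lemma cast_mod_two_inj {w : ℕ} (hw : 2 ≤ w) {n m : ℕ}
    (h : ((n % 2 : ℕ) : ZMod w) = ((m % 2 : ℕ) : ZMod w)) : n % 2 = m % 2 := by
  rw [ZMod.natCast_eq_natCast_iff] at h
  exact Nat.ModEq.eq_of_lt_of_lt h (by omega) (by omega)

lemma hits_card (w : ℕ) [NeZero w] (hw : 2 ≤ w) (k : ℕ) (S : Finset (ℕ × ZMod w)) :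
    (hits w k S).card * S.card ≤ 2 ^ k := by
  induction k generalizing S with
  | zero =>
    rcases S.eq_empty_or_nonempty with rfl | ⟨p, hp⟩
    · simp
    rcases (hits w 0 S).eq_empty_or_nonempty with h | ⟨x, hx⟩
    · simp [h]
    have h1 : (hits w 0 S).card ≤ 1 := by
      rw [Finset.card_le_one]
      intro a ha b hb
      rw [mem_hits] at ha hb
      have h1 := (ha.2 p hp).2
      have h2 := (hb.2 p hp).2
      simp only [off, add_zero] at h1 h2
      ext1
      · rw [← h1, ← h2]
      · have := ha.1; have := hb.1; simp at *; omega
    have h2 : S.card ≤ 1 := by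
      rw [Finset.card_le_one]
      intro a ha b hb
      rw [mem_hits] at hx
      have h1 := hx.2 a ha
      have h2 := hx.2 b hb
      simp only [off, add_zero] at h1 h2
      ext1
      · have := h1.1; have := h2.1; simp at *; omega
      · rw [h1.2, h2.2]
    simpa using Nat.mul_le_mul h1 h2
  | succ k ih =>
    set S0 := S.filter (fun p => p.1 < 2 ^ k) with hS0
    set S2 := S.filter (fun p => ¬ p.1 < 2 ^ k) with hS2
    set S1 := S2.image (fun p => (p.1 - 2 ^ k, p.2)) with hS1
    have hc1 : S1.card = S2.card := by
      apply Finset.card_image_of_injOn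
      intro a ha b hb hab
      simp only [hS2, Finset.coe_filter, Set.mem_ofPred_eq, Prod.mk.injEq] at ha hb hab
      ext1
      · omega
      · exact hab.2
    have hc : S.card = S0.card + S1.card := by
      rw [hc1]; exact (Finset.card_filter_add_card_filter_not _).symm
    have hpow : 2 ^ (k + 1) = 2 ^ k + 2 ^ k := by ring
    -- the lower half
    have hlow : ∀ x ∈ hits w (k + 1) S, (x.1, x.2 / 2) ∈ hits w k S0 := by
      intro x hx
      rw [mem_hits] at hx ⊢
      refine ⟨by have := hx.1; simp only; omega, fun p hp => ?_⟩
      rw [hS0, Finset.mem_filter] at hp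
      have := (hx.2 p hp.1).2
      rw [off, if_pos hp.2] at this
      exact ⟨hp.2, this⟩
    have hup : ∀ x ∈ hits w (k + 1) S,
        (x.1 + (off w k (x.2 / 2) (2 ^ k - 1) + ((x.2 % 2 : ℕ) : ZMod w)), x.2 / 2) ∈
          hits w k S1 := by
      intro x hx
      rw [mem_hits] at hx ⊢
      refine ⟨by have := hx.1; simp only; omega, fun q hq => ?_⟩
      rw [hS1, Finset.mem_image] at hq
      obtain ⟨p, hp, rfl⟩ := hq
      rw [hS2, Finset.mem_filter] at hp
      obtain ⟨h1, h2⟩ := hx.2 p hp.1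
      rw [off, if_neg hp.2] at h2
      refine ⟨by simp only; omega, ?_⟩
      simp only
      rw [h2]; ring
    have hA2 : (hits w (k + 1) S).card ≤ (hits w k S0).card * 2 := by
      rw [← Finset.card_range 2, ← Finset.card_product]
      apply Finset.card_le_card_of_injOn (fun x => ((x.1, x.2 / 2), x.2 % 2))
      · intro x hx
        simp only [Finset.coe_product, Set.mem_prod, Finset.mem_coe, Finset.mem_range]
        exact ⟨hlow x hx, by omega⟩
      · intro x _ y _ hxy
        simp only [Prod.mk.injEq] at hxy
        ext1
        · exact hxy.1.1
        · omega
    have hB2 : (hits w (k + 1) S).card ≤ (hits w k S1).card * 2 := by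
      rw [← Finset.card_range 2, ← Finset.card_product]
      apply Finset.card_le_card_of_injOn (fun x =>
        ((x.1 + (off w k (x.2 / 2) (2 ^ k - 1) + ((x.2 % 2 : ℕ) : ZMod w)), x.2 / 2), x.2 % 2))
      · intro x hx
        simp only [Finset.coe_product, Set.mem_prod, Finset.mem_coe, Finset.mem_range]
        exact ⟨hup x hx, by omega⟩
      · intro x _ y _ hxy
        simp only [Prod.mk.injEq] at hxy
        obtain ⟨⟨h1, h2⟩, h3⟩ := hxy
        rw [h2, h3] at h1
        ext1
        · exact add_right_cancel h1
        · omega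
    rcases S0.eq_empty_or_nonempty with h0 | ⟨p0, hp0⟩
    · have := ih S1
      rw [hc, h0, Finset.card_empty, zero_add]
      nlinarith [Nat.mul_le_mul_right S1.card hB2]
    rcases S1.eq_empty_or_nonempty with h1 | ⟨p1, hp1⟩
    · have := ih S0
      rw [hc, h1, Finset.card_empty, add_zero]
      nlinarith [Nat.mul_le_mul_right S0.card hA2]
    have hA : (hits w (k + 1) S).card ≤ (hits w k S0).card := by
      apply Finset.card_le_card_of_injOn (fun x : ZMod w × ℕ => (x.1, x.2 / 2)) (fun x hx => hlow x hx)
      intro x hx y hy hxy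
      simp only [Prod.mk.injEq] at hxy
      have h1 := ((mem_hits.1 (hup x hx)).2 p1 hp1).2
      have h2 := ((mem_hits.1 (hup y hy)).2 p1 hp1).2
      rw [h1] at h2
      simp only [hxy.1, hxy.2] at h2
      have h3 := cast_mod_two_inj hw (add_left_cancel (add_left_cancel (add_right_cancel h2)))
      ext1
      · exact hxy.1
      · omega
    have hB : (hits w (k + 1) S).card ≤ (hits w k S1).card := by
      apply Finset.card_le_card_of_injOn (fun x : ZMod w × ℕ =>
        (x.1 + (off w k (x.2 / 2) (2 ^ k - 1) + ((x.2 % 2 : ℕ) : ZMod w)), x.2 / 2)) (fun x hx => hup x hx)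
      intro x hx y hy hxy
      simp only [Prod.mk.injEq] at hxy
      obtain ⟨hxy1, hxy2⟩ := hxy
      have h1 := ((mem_hits.1 (hlow x hx)).2 p0 hp0).2
      have h2 := ((mem_hits.1 (hlow y hy)).2 p0 hp0).2
      rw [h1] at h2
      simp only [hxy2] at h2
      have h4 := add_right_cancel h2
      rw [h4, hxy2] at hxy1
      have h3 := cast_mod_two_inj hw (add_left_cancel (add_left_cancel hxy1))
      ext1
      · exact h4
      · omega
    rw [hc, mul_add, hpow]
    exact add_le_add ((Nat.mul_le_mul_right _ hA).trans (ih S0))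
      ((Nat.mul_le_mul_right _ hB).trans (ih S1))

/-- The pattern with bottom column `x.1` and bit code `x.2`. -/
def pat (w k : ℕ) (x : ZMod w × ℕ) : Finset (ℕ × ℕ) :=
  (Finset.range (2 ^ k)).image fun i => (i, (x.1 + off w k x.2 i).val)

lemma pat_card (w k : ℕ) (x : ZMod w × ℕ) : (pat w k x).card = 2 ^ k := by
  rw [pat, Finset.card_image_of_injective, Finset.card_range]
  intro a b h
  exact (Prod.mk.inj h).1

lemma colAt_pat (w k : ℕ) (x : ZMod w × ℕ) (i : ℕ) (hi : i < 2 ^ k) :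
    colAt (pat w k x) i = (x.1 + off w k x.2 i).val := by
  have : ((pat w k x).filter fun p => p.1 = i) = {(i, (x.1 + off w k x.2 i).val)} := by
    ext p
    simp only [pat, Finset.mem_filter, Finset.mem_image, Finset.mem_range, Finset.mem_singleton]
    constructor
    · rintro ⟨⟨a, _, rfl⟩, h⟩
      simp only at h
      rw [h]
    · rintro rfl
      exact ⟨⟨i, hi, rfl⟩, rfl⟩
  rw [colAt, this]
  simp

lemma span_pat (w : ℕ) [NeZero w] (k : ℕ) (x : ZMod w × ℕ) :
    ((span w (2 ^ k) (pat w k x) : ℕ) : ZMod w) = off w k x.2 (2 ^ k - 1) := by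
  have h := Nat.two_pow_pos k
  rw [span, colAt_pat w k x _ (by omega), colAt_pat w k x _ h, off_zero, add_zero,
    ZMod.natCast_mod, Nat.cast_sub ((ZMod.val_lt x.1).le.trans (Nat.le_add_left _ _))]
  simp

lemma pat_mem (w : ℕ) [NeZero w] (k : ℕ) (x : ZMod w × ℕ) : pat w k x ∈ FHT w k := by
  induction k generalizing x with
  | zero =>
    simp only [FHT, Finset.mem_image, Finset.mem_range]
    exact ⟨x.1.val, ZMod.val_lt _, by simp [pat, off]⟩
  | succ k ih =>
    simp only [FHT, Finset.mem_image, Finset.mem_product]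
    refine ⟨(pat w k (x.1, x.2 / 2), x.2 % 2), ⟨ih _, ?_⟩, ?_⟩
    · have : x.2 % 2 < 2 := Nat.mod_lt _ (by norm_num)
      simp only [Finset.mem_insert, Finset.mem_singleton]
      omega
    have hpow : 2 ^ (k + 1) = 2 ^ k + 2 ^ k := by ring
    have key : ∀ i, ((x.1 + off w k (x.2 / 2) i).val +
        (span w (2 ^ k) (pat w k (x.1, x.2 / 2)) + x.2 % 2)) % w =
        (x.1 + (off w k (x.2 / 2) i + (off w k (x.2 / 2) (2 ^ k - 1) +
          ((x.2 % 2 : ℕ) : ZMod w)))).val := by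
      intro i
      rw [← ZMod.val_natCast]
      congr 1
      push_cast
      rw [span_pat]
      simp
      ring
    ext p
    simp only [tran, Finset.mem_union, Finset.mem_image]
    constructor
    · rintro (h | ⟨q, hq, rfl⟩)
      · simp only [pat, Finset.mem_image, Finset.mem_range] at h ⊢
        obtain ⟨i, hi, rfl⟩ := h
        exact ⟨i, by omega, by rw [off, if_pos hi]⟩
      · simp only [pat, Finset.mem_image, Finset.mem_range] at hq
        obtain ⟨i, hi, rfl⟩ := hq
        simp only [key]
        simp only [pat, Finset.mem_image, Finset.mem_range]
        refine ⟨i + 2 ^ k, by omega, ?_⟩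
        rw [off, if_neg (by omega), Nat.add_sub_cancel]
    · intro h
      rw [pat, Finset.mem_image] at h
      obtain ⟨i, hi, rfl⟩ := h
      rw [Finset.mem_range] at hi
      by_cases h : i < 2 ^ k
      · left
        rw [off, if_pos h, pat, Finset.mem_image]
        exact ⟨i, Finset.mem_range.2 h, rfl⟩
      · right
        rw [off, if_neg h]
        refine ⟨(i - 2 ^ k, (x.1 + off w k (x.2 / 2) (i - 2 ^ k)).val), ?_, ?_⟩
        · rw [pat, Finset.mem_image]
          exact ⟨i - 2 ^ k, Finset.mem_range.2 (by omega), rfl⟩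
        · simp only [key]
          rw [Nat.sub_add_cancel (by omega)]

/-- A set of pixels `S` lies in at most `2 ^ k / |S|` patterns. -/
lemma pat_count (w : ℕ) [NeZero w] (hw : 2 ≤ w) (k : ℕ) (S : Finset (ℕ × ℕ)) :
    (((Finset.univ : Finset (ZMod w)) ×ˢ Finset.range (2 ^ k)).filter
      fun x => S ⊆ pat w k x).card * S.card ≤ 2 ^ k := by
  rcases Finset.eq_empty_or_nonempty (((Finset.univ : Finset (ZMod w)) ×ˢ
    Finset.range (2 ^ k)).filter fun x => S ⊆ pat w k x) with h | ⟨y, hy⟩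
  · simp [h]
  have hy2 := (Finset.mem_filter.1 hy).2
  have hlt : ∀ p ∈ S, p.2 < w := by
    intro p hp
    have := hy2 hp
    rw [pat, Finset.mem_image] at this
    obtain ⟨i, _, rfl⟩ := this
    exact ZMod.val_lt _
  set S' := S.image (fun p => (p.1, (p.2 : ZMod w))) with hS'
  have hc : S'.card = S.card := by
    apply Finset.card_image_of_injOn
    intro a ha b hb hab
    simp only [Prod.mk.injEq] at hab
    ext1
    · exact hab.1
    · exact Nat.ModEq.eq_of_lt_of_lt ((ZMod.natCast_eq_natCast_iff _ _ _).1 hab.2)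
        (hlt a ha) (hlt b hb)
  refine le_trans ?_ (hits_card w hw k S')
  rw [hc]
  refine Nat.mul_le_mul_right _ (Finset.card_le_card ?_)
  intro x hx
  rw [Finset.mem_filter, Finset.mem_product, Finset.mem_range] at hx
  rw [mem_hits]
  refine ⟨hx.1.2, fun q hq => ?_⟩
  rw [hS', Finset.mem_image] at hq
  obtain ⟨p, hp, rfl⟩ := hq
  have := hx.2 hp
  rw [pat, Finset.mem_image] at this
  obtain ⟨i, hi, rfl⟩ := this
  exact ⟨Finset.mem_range.1 hi, by simp⟩

/-! ### The entropy argument -/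

lemma entropy_aux (n a c : ℝ) (hn : 0 < n) (hc : 0 ≤ c) (hca : c ≤ a) :
    c * (Real.log n - Real.log a) ≤ n / 2 - c + c * Real.log 2 := by
  rcases hc.eq_or_lt with rfl | hc'
  · simp; linarith
  have ha : 0 < a := lt_of_lt_of_le hc' hca
  have h1 := Real.log_le_sub_one_of_pos (show 0 < n / (2 * a) by positivity)
  rw [Real.log_div hn.ne' (by positivity), Real.log_mul (by norm_num) ha.ne'] at h1
  have h2 : c * (n / (2 * a)) ≤ n / 2 := by
    have : c / a ≤ 1 := by rw [div_le_one ha]; exact hca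
    calc c * (n / (2 * a)) = (c / a) * (n / 2) := by field_simp
      _ ≤ 1 * (n / 2) := by gcongr
      _ = n / 2 := one_mul _
  nlinarith [mul_le_mul_of_nonneg_left h1 hc]

lemma entropy_gate {α : Type*} [DecidableEq α] (A B : Finset α) :
    ∑ p ∈ A ∪ B, (Real.log ((A ∪ B).card : ℝ) -
      Real.log (((if p ∈ A then A else B).card : ℕ) : ℝ)) ≤ (A ∪ B).card * Real.log 2 := by
  rcases (A ∪ B).eq_empty_or_nonempty with h | h
  · simp [h]
  have hn : (0 : ℝ) < (A ∪ B).card := by exact_mod_cast h.card_pos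
  have hcard : ((A ∪ B).card : ℝ) = A.card + (B \ A).card := by
    rw [← Finset.union_sdiff_self_eq_union, Finset.card_union_of_disjoint Finset.disjoint_sdiff]
    push_cast; rfl
  have hsum : ∑ p ∈ A ∪ B, (Real.log ((A ∪ B).card : ℝ) -
      Real.log (((if p ∈ A then A else B).card : ℕ) : ℝ)) =
      A.card * (Real.log ((A ∪ B).card : ℝ) - Real.log (A.card : ℝ)) +
      (B \ A).card * (Real.log ((A ∪ B).card : ℝ) - Real.log (B.card : ℝ)) := by
    have hu : A ∪ B = A ∪ (B \ A) := (Finset.union_sdiff_self_eq_union).symm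
    generalize Real.log ((A ∪ B).card : ℝ) = L
    rw [hu, Finset.sum_union Finset.disjoint_sdiff]
    congr 1
    · rw [Finset.sum_congr rfl (g := fun _ => L - Real.log (A.card : ℝ))
        (fun p hp => by rw [if_pos hp]), Finset.sum_const, nsmul_eq_mul]
    · rw [Finset.sum_congr rfl (g := fun _ => L - Real.log (B.card : ℝ))
        (fun p hp => by rw [if_neg (Finset.mem_sdiff.1 hp).2]), Finset.sum_const, nsmul_eq_mul]
  rw [hsum]
  have h1 := entropy_aux (A ∪ B).card A.card A.card hn (by positivity) le_rfl
  have h2 := entropy_aux (A ∪ B).card B.card (B \ A).card hn (by positivity)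
    (by exact_mod_cast Finset.card_le_card Finset.sdiff_subset)
  have h3 : ((A ∪ B).card : ℝ) * Real.log 2 =
      A.card * Real.log 2 + (B \ A).card * Real.log 2 := by rw [hcard]; ring
  linarith

lemma path_bound {α : Type*} [DecidableEq α] {g : ℕ} (s A B : Fin g → Finset α)
    (hA : ∀ t, IsOperand s t (A t)) (hB : ∀ t, IsOperand s t (B t))
    (hs : ∀ t, s t = A t ∪ B t) (T : Finset α) (p : α) (t : Fin g) (hp : p ∈ s t)
    (ht : s t ⊆ T) :
    Real.log ((s t).card : ℝ) ≤
      ∑ v ∈ Finset.univ.filter (fun v => v ≤ t ∧ p ∈ s v ∧ s v ⊆ T),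
        (Real.log ((s v).card : ℝ) -
          Real.log (((if p ∈ A v then A v else B v).card : ℕ) : ℝ)) := by
  induction t using WellFoundedLT.induction with
  | _ t ih =>
  have hsub : ∀ v, p ∈ s v → p ∈ (if p ∈ A v then A v else B v) ∧
      (if p ∈ A v then A v else B v) ⊆ s v := by
    intro v hv
    rw [hs v] at hv ⊢
    split_ifs with h
    · exact ⟨h, Finset.subset_union_left⟩
    · exact ⟨(Finset.mem_union.1 hv).resolve_left h, Finset.subset_union_right⟩
  have hnn : ∀ v, p ∈ s v → 0 ≤ Real.log ((s v).card : ℝ) -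
      Real.log (((if p ∈ A v then A v else B v).card : ℕ) : ℝ) := by
    intro v hv
    obtain ⟨h1, h2⟩ := hsub v hv
    have h3 : 0 < (if p ∈ A v then A v else B v).card := Finset.card_pos.2 ⟨p, h1⟩
    have h4 := Finset.card_le_card h2
    have := Real.log_le_log (show (0 : ℝ) < _ from Nat.cast_pos.2 h3)
      (show _ ≤ (((s v).card : ℕ) : ℝ) from Nat.cast_le.2 h4)
    linarith
  have hmem : t ∈ Finset.univ.filter (fun v => v ≤ t ∧ p ∈ s v ∧ s v ⊆ T) := by
    simp [hp, ht]
  rw [← Finset.add_sum_erase _ _ hmem]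
  obtain ⟨h1, h2⟩ := hsub t hp
  have hop : IsOperand s t (if p ∈ A t then A t else B t) := by
    split_ifs
    · exact hA t
    · exact hB t
  rcases hop with ⟨q, hq⟩ | ⟨u, hu, hq⟩
  · have : 0 ≤ ∑ v ∈ (Finset.univ.filter (fun v => v ≤ t ∧ p ∈ s v ∧ s v ⊆ T)).erase t,
        (Real.log ((s v).card : ℝ) -
          Real.log (((if p ∈ A v then A v else B v).card : ℕ) : ℝ)) := by
      apply Finset.sum_nonneg
      intro v hv
      have := (Finset.mem_filter.1 (Finset.mem_of_mem_erase hv)).2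
      exact hnn v this.2.1
    have h0 : Real.log (((if p ∈ A t then A t else B t).card : ℕ) : ℝ) = 0 := by
      rw [hq]; simp
    linarith
  · rw [hq] at h1 h2
    have hi := ih u hu h1 (h2.trans ht)
    have hle : ∑ v ∈ Finset.univ.filter (fun v => v ≤ u ∧ p ∈ s v ∧ s v ⊆ T),
        (Real.log ((s v).card : ℝ) -
          Real.log (((if p ∈ A v then A v else B v).card : ℕ) : ℝ)) ≤
        ∑ v ∈ (Finset.univ.filter (fun v => v ≤ t ∧ p ∈ s v ∧ s v ⊆ T)).erase t,
        (Real.log ((s v).card : ℝ) -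
          Real.log (((if p ∈ A v then A v else B v).card : ℕ) : ℝ)) := by
      apply Finset.sum_le_sum_of_subset_of_nonneg
      · intro v hv
        have hv' := (Finset.mem_filter.1 hv).2
        rw [Finset.mem_erase, Finset.mem_filter]
        exact ⟨(lt_of_le_of_lt hv'.1 hu).ne, Finset.mem_univ _, (lt_of_le_of_lt hv'.1 hu).le,
          hv'.2⟩
      · intro v hv _
        have := (Finset.mem_filter.1 (Finset.mem_of_mem_erase hv)).2
        exact hnn v this.2.1
    rw [hq]
    linarith

/-- Entropy bound for one computed pattern. -/
lemma pattern_bound {α : Type*} [DecidableEq α] {g : ℕ} (s : Fin g → Finset α)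
    (hv : ValidProg s) (T : Finset α) (hT : (∃ p, T = {p}) ∨ ∃ t, s t = T) :
    (T.card : ℝ) * Real.log T.card ≤
      ∑ v : Fin g, if s v ⊆ T then ((s v).card : ℝ) * Real.log 2 else 0 := by
  have hlog2 : 0 ≤ Real.log 2 := Real.log_nonneg (by norm_num)
  rcases hT with ⟨p, rfl⟩ | ⟨t, rfl⟩
  · simp only [Finset.card_singleton, Nat.cast_one, Real.log_one, mul_zero]
    apply Finset.sum_nonneg
    intro v _
    split_ifs <;> positivity
  choose A B hA hB hs using hv
  have h1 : ∀ p ∈ s t, Real.log ((s t).card : ℝ) ≤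
      ∑ v : Fin g, if p ∈ s v ∧ s v ⊆ s t then (Real.log ((s v).card : ℝ) -
          Real.log (((if p ∈ A v then A v else B v).card : ℕ) : ℝ)) else 0 := by
    intro p hp
    refine (path_bound s A B hA hB hs (s t) p t hp subset_rfl).trans ?_
    rw [← Finset.sum_filter]
    apply Finset.sum_le_sum_of_subset_of_nonneg
    · intro v hv
      have := (Finset.mem_filter.1 hv).2
      exact Finset.mem_filter.2 ⟨Finset.mem_univ _, this.2⟩
    · intro v hv _
      have hpv := (Finset.mem_filter.1 hv).2.1
      have hpv' := hpv
      rw [hs v] at hpv'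
      have h3 : p ∈ (if p ∈ A v then A v else B v) := by
        split_ifs with h
        · exact h
        · exact (Finset.mem_union.1 hpv').resolve_left h
      have h4 : (if p ∈ A v then A v else B v) ⊆ s v := by
        rw [hs v]
        split_ifs with h
        · exact Finset.subset_union_left
        · exact Finset.subset_union_right
      have := Real.log_le_log (show (0 : ℝ) < _ from Nat.cast_pos.2 (Finset.card_pos.2 ⟨p, h3⟩))
        (show _ ≤ (((s v).card : ℕ) : ℝ) from Nat.cast_le.2 (Finset.card_le_card h4))
      linarith
  have h2 := Finset.sum_le_sum h1
  rw [Finset.sum_const, nsmul_eq_mul, Finset.sum_comm] at h2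
  refine h2.trans (Finset.sum_le_sum fun v _ => ?_)
  by_cases hvt : s v ⊆ s t
  · simp only [hvt, and_true, if_true]
    rw [← Finset.sum_filter, Finset.filter_mem_eq_inter, Finset.inter_eq_right.2 hvt]
    have := entropy_gate (A v) (B v)
    rw [← hs v] at this
    exact this
  · simp [hvt]

/-- The sharp bound for every program. -/
lemma prog_bound (w d : ℕ) (hw : 2 ≤ w) {g : ℕ} (s : Fin g → Finset (ℕ × ℕ))
    (hv : ValidProg s) (hc : Computes s (FHT w d)) : w * 2 ^ d * d ≤ g := by
  have : NeZero w := ⟨by omega⟩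
  have hlog2 : 0 < Real.log 2 := Real.log_pos (by norm_num)
  set I := (Finset.univ : Finset (ZMod w)) ×ˢ Finset.range (2 ^ d) with hI
  have hIc : I.card = w * 2 ^ d := by
    rw [hI, Finset.card_product, Finset.card_range, Finset.card_univ, ZMod.card]
  have h1 := Finset.sum_le_sum (fun x (_ : x ∈ I) =>
    pattern_bound s hv (pat w d x) (hc _ (pat_mem w d x)))
  simp only [pat_card] at h1
  rw [Finset.sum_const, nsmul_eq_mul, Finset.sum_comm, hIc] at h1
  have h2 : ∀ v : Fin g, ∑ x ∈ I, (if s v ⊆ pat w d x then ((s v).card : ℝ) * Real.log 2 else 0)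
      ≤ 2 ^ d * Real.log 2 := by
    intro v
    rw [← Finset.sum_filter, Finset.sum_const, nsmul_eq_mul, ← mul_assoc]
    have := pat_count w hw d (s v)
    have h3 : (((I.filter fun x => s v ⊆ pat w d x).card : ℕ) : ℝ) * ((s v).card : ℝ) ≤ 2 ^ d := by
      exact_mod_cast this
    exact mul_le_mul_of_nonneg_right h3 hlog2.le
  have h3 := h1.trans (Finset.sum_le_sum fun v _ => h2 v)
  rw [Finset.sum_const, nsmul_eq_mul, Finset.card_univ, Fintype.card_fin] at h3
  push_cast at h3
  rw [Real.log_pow] at h3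
  have hpos : (0 : ℝ) < 2 ^ d * Real.log 2 := by positivity
  have h4 : ((w : ℝ) * 2 ^ d * d) * (2 ^ d * Real.log 2) ≤ g * (2 ^ d * Real.log 2) := by
    calc _ = (w : ℝ) * 2 ^ d * (2 ^ d * (d * Real.log 2)) := by ring
      _ ≤ _ := h3
  exact_mod_cast le_of_mul_le_mul_right h4 hpos

/-- For `h = 2 ^ d` and `w ≥ 2`, every binary-union straight-line program computing the
FHT pattern set `H_{h,w}` has at least `log₉ 8 · w · h · log₂ h = log₉ 8 · w · 2 ^ d · d`
steps, i.e. `OR2(H_{h,w}) ≥ log₉ 8 · w · h · log₂ h`. -/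
theorem fht_or2_lower (w d : ℕ) (hw : 2 ≤ w) :
    Real.logb 9 8 * (w : ℝ) * (2 ^ d : ℝ) * (d : ℝ) ≤ (OR2 (FHT w d) : ℝ) := by
  have h1 : w * 2 ^ d * d ≤ OR2 (FHT w d) := by
    obtain ⟨g, s, hs⟩ := exists_prog (FHT w d) (FHT_nonempty_s12 w d)
    have hne : {g | ∃ s : Fin g → Finset (ℕ × ℕ), ValidProg s ∧ Computes s (FHT w d)}.Nonempty :=
      ⟨g, s, hs⟩
    obtain ⟨s', h1, h2⟩ := Nat.sInf_mem hne
    exact prog_bound w d hw s' h1 h2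
  have h2 : Real.logb 9 8 ≤ 1 := by
    rw [Real.logb_le_iff_le_rpow (by norm_num) (by norm_num)]
    norm_num
  have h3 : (w : ℝ) * 2 ^ d * d ≤ (OR2 (FHT w d) : ℝ) := by exact_mod_cast h1
  calc Real.logb 9 8 * (w : ℝ) * (2 ^ d : ℝ) * (d : ℝ)
      = Real.logb 9 8 * ((w : ℝ) * 2 ^ d * d) := by ring
    _ ≤ 1 * ((w : ℝ) * 2 ^ d * d) := by gcongr
    _ ≤ _ := by rw [one_mul]; exact h3
end
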